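/- Let T be a C² expanding map of the circle 𝕋 with inf_x |DT(x)| ≥ Λ > 1, and for ε ∈ (−1,1) let T_ε(x) = T(x) + ε (mod 1), with transfer operators P_ε with respect to Haar (Lebesgue) measure m given by (P_ε f)(x) = Σ_{y : T_ε(y)=x} f(y)/|DT_ε(y)|; assume sup_{ε∈(−1,1)} sup_x |D²T_ε(x)/DT_ε(x)| ≤ C₁ < ∞. Then there exists a constant C̃ < ∞ (depending only on T, Λ, C₁ and the number m of branches) such that for all ε₁, ε₂ ∈ (−1,1) and all f of bounded variation: ‖P_{ε₁} f − P_{ε₂} f‖_{L¹(m)} ≤ C̃ |ε₁ − ε₂| ‖f‖_BV. In particular the family satisfies the Lipschitz continuity property (Lip): d(P_{ε₁}, P_{ε₂}) ≤ C̃ |ε₁ − ε₂|, where d(P,Q) = sup{‖Pf − Qf‖_{L¹(m)} : ‖f‖_BV ≤ 1}. -/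

import Mathlib

open MeasureTheory
open scoped BigOperators

/-- The variation of a function on the circle, computed through its periodic lift on `[0,1]`. -/
noncomputable def circleVar (f : UnitAddCircle → ℝ) : ENNReal :=
  eVariationOn (fun x : ℝ => f (x : UnitAddCircle)) (Set.Icc 0 1)

/-- The BV norm `‖f‖_BV = ‖f‖_{L¹} + Var(f)` of a function on the circle
(Haar/Lebesgue measure). -/
noncomputable def bvNormT (f : UnitAddCircle → ℝ) : ℝ :=
  (∫ x, |f x|) + (circleVar f).toReal

/-- The derivative of a circle map, read off from a `1`-periodic-derivative lift `F` through
the canonical representative in `[0,1)`. -/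
noncomputable def circleDeriv (F : ℝ → ℝ) : UnitAddCircle → ℝ := fun x =>
  letI : Fact ((0 : ℝ) < 1) := ⟨one_pos⟩
  deriv F ((AddCircle.equivIco 1 0 x : Set.Ico (0 : ℝ) (0 + 1)) : ℝ)

/-! Since `T_ε` is `T` followed by the rotation by `ε`, `P_ε f` is `P₀ f` translated by `ε`. The
translates of a function `g` of bounded variation by `a` and by `b` are at most `|a - b| * Var g`
apart in `L¹`, so it suffices to bound `Var (P₀ f)`. The `|d|` inverse branches of `T` together run
exactly once around the circle, hence `Var (P₀ f) ≤ Var (f * w)` with `w = 1 / |DT|`, and the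
Leibniz rule for the variation of a product bounds this by `2 * ‖f‖_BV * ‖w‖_BV`. -/

section EVariationOn

open Function Set

variable {α E ι : Type*}

lemma eVariationOn_finsetSum_le [LinearOrder α] [SeminormedAddCommGroup E] (s : Finset ι)
    (f : ι → α → E) (t : Set α) :
    eVariationOn (fun x => ∑ i ∈ s, f i x) t ≤ ∑ i ∈ s, eVariationOn (f i) t := by
  refine iSup_le fun ⟨n, u, hu, hut⟩ => ?_
  calc ∑ j ∈ Finset.range n, edist (∑ i ∈ s, f i (u (j + 1))) (∑ i ∈ s, f i (u j))
      ≤ ∑ j ∈ Finset.range n, ∑ i ∈ s, edist (f i (u (j + 1))) (f i (u j)) := by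
        simp only [edist_eq_enorm_sub, ← Finset.sum_sub_distrib, enorm_eq_nnnorm]
        exact Finset.sum_le_sum fun j _ => mod_cast nnnorm_sum_le _ _
    _ = ∑ i ∈ s, ∑ j ∈ Finset.range n, edist (f i (u (j + 1))) (f i (u j)) := Finset.sum_comm
    _ ≤ ∑ i ∈ s, eVariationOn (f i) t := Finset.sum_le_sum fun i _ => eVariationOn.sum_le hu hut

variable [PseudoEMetricSpace E] {g : ℝ → E} {p : ℝ}

lemma eVariationOn_comp_add_const (g : ℝ → E) (a b c : ℝ) :
    eVariationOn (fun x => g (x + c)) (Icc a b) = eVariationOn g (Icc (a + c) (b + c)) := by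
  rw [← image_add_const_Icc]
  exact eVariationOn.comp_eq_of_monotoneOn g (· + c) fun _ _ _ _ h => add_le_add_left h c

lemma eVariationOn_Icc_add_zsmul_period (hg : Periodic g p) (a b : ℝ) (n : ℤ) :
    eVariationOn g (Icc (a + n • p) (b + n • p)) = eVariationOn g (Icc a b) := by
  rw [← eVariationOn_comp_add_const, funext (hg.zsmul n)]

lemma eVariationOn_Icc_add_Icc (g : ℝ → E) {a b c : ℝ} (hab : a ≤ b) (hbc : b ≤ c) :
    eVariationOn g (Icc a b) + eVariationOn g (Icc b c) = eVariationOn g (Icc a c) := by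
  simpa using eVariationOn.Icc_add_Icc g hab hbc (mem_univ b)

lemma eVariationOn_Icc_add_period (hg : Periodic g p) (hp : 0 < p) (a : ℝ) :
    eVariationOn g (Icc a (a + p)) = eVariationOn g (Icc 0 p) := by
  obtain ⟨n, hn, -⟩ := existsUnique_add_zsmul_mem_Ico hp a 0
  set r := a + n • p
  rw [zero_add] at hn
  calc eVariationOn g (Icc a (a + p))
      = eVariationOn g (Icc r (r + p)) := by
        rw [← eVariationOn_Icc_add_zsmul_period hg a (a + p) n, add_right_comm]
    _ = eVariationOn g (Icc r p) + eVariationOn g (Icc p (r + p)) :=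
        (eVariationOn_Icc_add_Icc g hn.2.le (by linarith [hn.1])).symm
    _ = eVariationOn g (Icc 0 r) + eVariationOn g (Icc r p) := by
        rw [add_comm, ← eVariationOn_Icc_add_zsmul_period hg 0 r 1, one_zsmul, zero_add]
    _ = eVariationOn g (Icc 0 p) := eVariationOn_Icc_add_Icc g hn.1 hn.2.le

lemma sum_eVariationOn_comp_add_natCast (g : ℝ → E) (n : ℕ) :
    ∑ k ∈ Finset.range n, eVariationOn (fun x => g (x + k)) (Icc 0 1) =
      eVariationOn g (Icc 0 n) := by
  have := eVariationOn.sum' g (I := fun k : ℕ => (k : ℝ)) Nat.mono_cast (n := n)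
  simpa only [eVariationOn_comp_add_const, zero_add, Nat.cast_add, Nat.cast_one, Nat.cast_zero,
    add_comm (1 : ℝ)] using this

lemma locallyBoundedVariationOn_univ_of_periodic (hg : Periodic g p) (hp : 0 < p)
    (hvar : eVariationOn g (Icc 0 p) ≠ ⊤) : LocallyBoundedVariationOn g univ := by
  intro a b _ _
  obtain ⟨n, hn⟩ := Archimedean.arch (b - a) hp
  have hI : Monotone fun k : ℕ => a + k • p := fun _ _ h => by
    simpa using nsmul_le_nsmul_left hp.le h
  have hsum : eVariationOn g (Icc a (a + n • p)) = n * eVariationOn g (Icc 0 p) := by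
    have := eVariationOn.sum' g hI (n := n)
    simpa only [succ_nsmul, ← add_assoc, eVariationOn_Icc_add_period hg hp, Finset.sum_const,
      Finset.card_range, zero_smul, add_zero, nsmul_eq_mul, Nat.cast_zero, zero_mul] using this.symm
  refine ne_top_of_le_ne_top (hsum ▸ ENNReal.mul_ne_top (ENNReal.natCast_ne_top n) hvar) ?_
  rw [univ_inter]
  exact eVariationOn.mono g (Icc_subset_Icc_right (by linarith))

/- With `V` the variation function of `g` and `a ≤ b`, the integrand is at most
`V (x + b) - V (x + a)`, and the integral of this over a period telescopes to that of
`V (x + p) - V x` over `[a, b]`, where `V (x + p) - V x` is the variation of `g` over a period. -/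
lemma integral_abs_sub_comp_add_le {g : ℝ → ℝ} (hg : Periodic g p) (hp : 0 < p)
    (hvar : eVariationOn g (Icc 0 p) ≠ ⊤) (a b : ℝ) :
    ∫ x in 0..p, |g (x + a) - g (x + b)| ≤ |a - b| * (eVariationOn g (Icc 0 p)).toReal := by
  wlog hab : a ≤ b generalizing a b
  · simpa only [abs_sub_comm] using this b a (le_of_not_ge hab)
  have hloc := locallyBoundedVariationOn_univ_of_periodic hg hp hvar
  set V := variationOnFromTo g univ 0 with hV
  have hVint (c : ℝ) : ∀ u v, IntervalIntegrable (fun x => V (x + c)) volume u v := fun u v =>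
    Monotone.intervalIntegrable fun x y hxy => variationOnFromTo.monotoneOn hloc (mem_univ 0)
      (mem_univ _) (mem_univ _) (by gcongr)
  have hVint₀ : ∀ u v, IntervalIntegrable V volume u v := by simpa using hVint 0
  have hVp (x : ℝ) : V (x + p) - V x = (eVariationOn g (Icc 0 p)).toReal := by
    rw [hV, variationOnFromTo.sub_right hloc (mem_univ _) (mem_univ _) (mem_univ _),
      variationOnFromTo.eq_of_le _ _ (by linarith), univ_inter, eVariationOn_Icc_add_period hg hp]
  calc ∫ x in 0..p, |g (x + a) - g (x + b)|
      ≤ ∫ x in 0..p, (V (x + b) - V (x + a)) := by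
        simp only [intervalIntegral.integral_of_le hp.le]
        refine integral_mono_of_nonneg (.of_forall fun x => abs_nonneg _)
          ((hVint b 0 p).sub (hVint a 0 p)).1 (.of_forall fun x => ?_)
        exact (abs_sub_comm _ _).trans_le <| variationOnFromTo.abs_sub_le_sub_of_le hloc
          (mem_univ _) (mem_univ _) (mem_univ _) (by gcongr)
    _ = (∫ x in b..(b + p), V x) - ∫ x in a..(a + p), V x := by
        rw [intervalIntegral.integral_sub (hVint b 0 p) (hVint a 0 p)]
        simp only [intervalIntegral.integral_comp_add_right, zero_add, add_comm p]
    _ = (∫ x in (a + p)..(b + p), V x) - ∫ x in a..b, V x := by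
        linarith [intervalIntegral.integral_add_adjacent_intervals (hVint₀ a b) (hVint₀ b (b + p)),
          intervalIntegral.integral_add_adjacent_intervals (hVint₀ a (a + p))
            (hVint₀ (a + p) (b + p))]
    _ = ∫ x in a..b, (V (x + p) - V x) := by
        rw [intervalIntegral.integral_sub (hVint p a b) (hVint₀ a b),
          intervalIntegral.integral_comp_add_right]
    _ = |a - b| * (eVariationOn g (Icc 0 p)).toReal := by
        simp only [hVp, intervalIntegral.integral_const, smul_eq_mul, abs_sub_comm a,
          abs_of_nonneg (sub_nonneg.2 hab)]

end EVariationOn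

section Circle

open Function Set

lemma periodic_comp_addCircle_coe {𝕜 β : Type*} [AddCommGroup 𝕜] {p : 𝕜} (f : AddCircle p → β) :
    Periodic (fun x : 𝕜 => f x) p :=
  fun x => congrArg f (AddCircle.coe_add_period p x)

lemma addCircle_coe_eq_coe_iff {𝕜 : Type*} [AddCommGroup 𝕜] {p x y : 𝕜} :
    (x : AddCircle p) = y ↔ ∃ n : ℤ, x = y + n • p := by
  rw [← sub_eq_zero, ← AddCircle.coe_sub, AddCircle.coe_eq_zero_iff]
  simp only [eq_comm (b := x - y), sub_eq_iff_eq_add']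

variable {f g : UnitAddCircle → ℝ}

lemma integral_abs_sub_comp_sub_le (hg : circleVar g ≠ ⊤) (a b : ℝ) :
    ∫ x, |g (x - (a : UnitAddCircle)) - g (x - (b : UnitAddCircle))| ≤
      |a - b| * (circleVar g).toReal := by
  have h := integral_abs_sub_comp_add_le (periodic_comp_addCircle_coe g) one_pos hg (-a) (-b)
  rw [← UnitAddCircle.intervalIntegral_preimage 0, zero_add]
  simpa only [← sub_eq_add_neg, AddCircle.coe_sub, neg_sub_neg, abs_sub_comm b, circleVar] using h

lemma abs_sub_le_circleVar (hf : circleVar f ≠ ⊤) (x y : UnitAddCircle) :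
    |f x - f y| ≤ (circleVar f).toReal := by
  have := Fact.mk (one_pos (α := ℝ))
  obtain ⟨s, hs, rfl⟩ := AddCircle.eq_coe_Ico x
  obtain ⟨t, ht, rfl⟩ := AddCircle.eq_coe_Ico y
  exact BoundedVariationOn.dist_le hf (Ico_subset_Icc_self hs) (Ico_subset_Icc_self ht)

lemma intervalIntegrable_of_circleVar_ne_top (hf : circleVar f ≠ ⊤) :
    IntervalIntegrable (fun x : ℝ => f x) volume 0 1 := by
  obtain ⟨u, v, hu, hv, huv⟩ :=
    (BoundedVariationOn.locallyBoundedVariationOn hf).exists_monotoneOn_sub_monotoneOn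
  rw [← uIcc_of_le zero_le_one] at hu hv
  exact huv ▸ hu.intervalIntegrable.sub hv.intervalIntegrable

lemma circleVar_toReal_le_bvNormT (f : UnitAddCircle → ℝ) : (circleVar f).toReal ≤ bvNormT f :=
  le_add_of_nonneg_left (integral_nonneg fun _ => abs_nonneg _)

lemma abs_le_bvNormT (hf : circleVar f ≠ ⊤) (x : UnitAddCircle) : |f x| ≤ bvNormT f := by
  have hmean : ∫ _ in (0 : ℝ)..1, (|f x| - (circleVar f).toReal) ≤ ∫ y in (0 : ℝ)..1, |f y| := by
    refine intervalIntegral.integral_mono_on zero_le_one intervalIntegrable_const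
      (intervalIntegrable_of_circleVar_ne_top hf).abs fun y _ => ?_
    linarith [abs_sub_abs_le_abs_sub (f x) (f y), abs_sub_le_circleVar hf x y]
  have hint := UnitAddCircle.intervalIntegral_preimage 0 fun y => |f y|
  rw [zero_add] at hint
  rw [intervalIntegral.integral_const, sub_zero, one_smul, hint] at hmean
  exact sub_le_iff_le_add.1 hmean

lemma bvNormT_nonneg (f : UnitAddCircle → ℝ) : 0 ≤ bvNormT f :=
  ENNReal.toReal_nonneg.trans (circleVar_toReal_le_bvNormT f)

lemma circleVar_mul_le (hf : circleVar f ≠ ⊤) (hg : circleVar g ≠ ⊤) :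
    circleVar (f * g) ≤ ENNReal.ofReal (2 * bvNormT f * bvNormT g) := by
  have henorm {h : UnitAddCircle → ℝ} (hh : circleVar h ≠ ⊤) (x : UnitAddCircle) :
      ‖h x‖ₑ ≤ ENNReal.ofReal (bvNormT h) := by
    rw [Real.enorm_eq_ofReal_abs]
    exact ENNReal.ofReal_le_ofReal (abs_le_bvNormT hh x)
  have hvar {h : UnitAddCircle → ℝ} (hh : circleVar h ≠ ⊤) :
      circleVar h ≤ ENNReal.ofReal (bvNormT h) :=
    ENNReal.le_ofReal_iff_toReal_le hh (bvNormT_nonneg h) |>.2 (circleVar_toReal_le_bvNormT h)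
  calc circleVar (f * g)
      ≤ ENNReal.ofReal (bvNormT f) * circleVar g + ENNReal.ofReal (bvNormT g) * circleVar f :=
        eVariation_mul_le (fun x _ => henorm hf x) fun x _ => henorm hg x
    _ ≤ ENNReal.ofReal (bvNormT f) * ENNReal.ofReal (bvNormT g) +
          ENNReal.ofReal (bvNormT g) * ENNReal.ofReal (bvNormT f) := by
        gcongr
        exacts [hvar hg, hvar hf]
    _ = ENNReal.ofReal (2 * bvNormT f * bvNormT g) := by
        rw [mul_comm (ENNReal.ofReal (bvNormT g)), ← two_mul,
          ← ENNReal.ofReal_mul (bvNormT_nonneg f), mul_assoc, ENNReal.ofReal_mul two_pos.le,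
          ENNReal.ofReal_ofNat]

end Circle

section Lift

open Function Set
open scoped AddConstMap

lemma ne_zero_of_injective_of_map_add_const {F : ℝ → ℝ} (hinj : Injective F) {p c : ℝ}
    (hp : p ≠ 0) (hdeg : ∀ x, F (x + p) = F x + c) : c ≠ 0 := by
  rintro rfl
  exact hp (hinj (by simpa using hdeg 0))

lemma surjective_of_map_add_const {F : ℝ → ℝ} (hF : Continuous F) {p c : ℝ} (hc : c ≠ 0)
    (hdeg : ∀ x, F (x + p) = F x + c) : Surjective F := by
  intro t
  set n := ⌊(t - F 0) / c⌋
  have hmap (k : ℤ) : F (k • p) = F 0 + k * c := by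
    rw [← zsmul_eq_mul]
    exact AddConstMapClass.map_zsmul_const (AddConstMap.mk F hdeg) k
  have hmem : t ∈ uIcc (F (n • p)) (F ((n + 1) • p)) := by
    have hn : (n : ℝ) ≤ (t - F 0) / c := Int.floor_le _
    have hn' : (t - F 0) / c ≤ n + 1 := (Int.lt_floor_add_one _).le
    rw [hmap, hmap, Int.cast_add, Int.cast_one, mem_uIcc]
    rcases hc.lt_or_gt with hc | hc
    · rw [le_div_iff_of_neg hc] at hn
      rw [div_le_iff_of_neg hc] at hn'
      exact .inr ⟨by linarith, by linarith⟩
    · rw [le_div_iff₀ hc] at hn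
      rw [div_le_iff₀ hc] at hn'
      exact .inl ⟨by linarith, by linarith⟩
  obtain ⟨x, -, hx⟩ := intermediate_value_uIcc hF.continuousOn hmem
  exact ⟨x, hx⟩

variable {d : ℤ}

lemma exists_addConstEquiv_coe_eq {F : ℝ → ℝ} (hF : Continuous F) (hinj : Injective F)
    (hdeg : ∀ x, F (x + 1) = F x + d) : ∃ G : ℝ ≃+c[1, (d : ℝ)] ℝ, ⇑G = F := by
  have hd := ne_zero_of_injective_of_map_add_const hinj one_ne_zero hdeg
  exact ⟨⟨.ofBijective F ⟨hinj, surjective_of_map_add_const hF hd hdeg⟩, hdeg⟩, rfl⟩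

variable (F : ℝ ≃+c[1, (d : ℝ)] ℝ)

lemma coe_symm_add_intCast_eq_iff (t : ℝ) {m n : ℤ} :
    (F.symm (t + m) : UnitAddCircle) = F.symm (t + n) ↔ m ≡ n [ZMOD d] := by
  rw [eq_comm, addCircle_coe_eq_coe_iff, Int.modEq_iff_dvd]
  refine exists_congr fun k => ?_
  rw [zsmul_one]
  calc F.symm (t + n) = F.symm (t + m) + k
      ↔ F (F.symm (t + n)) = F (F.symm (t + m) + k) := F.injective.eq_iff.symm
    _ ↔ t + n = t + m + k * d := by
        rw [F.apply_symm_apply, AddConstMapClass.map_add_int', F.apply_symm_apply, zsmul_eq_mul]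
    _ ↔ n - m = d * k := by
        rw [add_assoc, add_right_inj, ← sub_eq_iff_eq_add', mul_comm]
        norm_cast

variable {T : UnitAddCircle → UnitAddCircle}

lemma range_coe_symm_add_intCast (hT : ∀ x : ℝ, T x = (F x : ℝ)) (t : ℝ) :
    range (fun n : ℤ => (F.symm (t + n) : UnitAddCircle)) = {y | T y = t} := by
  refine Subset.antisymm (range_subset_iff.2 fun n => ?_) fun y hy => ?_
  · rw [mem_ofPred_eq, hT, F.apply_symm_apply]
    exact addCircle_coe_eq_coe_iff.2 ⟨n, by rw [zsmul_one]⟩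
  · obtain ⟨s, rfl⟩ := QuotientAddGroup.mk_surjective y
    obtain ⟨n, hn⟩ := addCircle_coe_eq_coe_iff.1 ((hT s).symm.trans hy)
    rw [zsmul_one] at hn
    exact ⟨n, by simp only [← hn, F.symm_apply_apply]⟩

lemma bijOn_coe_symm_add_natCast (hT : ∀ x : ℝ, T x = (F x : ℝ)) (t : ℝ) :
    BijOn (fun k : ℕ => (F.symm (t + k) : UnitAddCircle)) (Finset.range d.natAbs)
      {y | T y = t} := by
  have hd : d ≠ 0 := Int.cast_ne_zero.1 <|
    ne_zero_of_injective_of_map_add_const F.injective one_ne_zero (AddConstMapClass.map_add_const F)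
  rw [← range_coe_symm_add_intCast F hT]
  refine ⟨fun k _ => ⟨k, by simp⟩, fun j hj k hk hjk => ?_, ?_⟩
  · rw [Finset.mem_coe, Finset.mem_range] at hj hk
    have hmod : (j : ℤ) ≡ k [ZMOD d] :=
      (coe_symm_add_intCast_eq_iff F t).1 (by simpa using hjk)
    rw [← Int.modEq_natAbs, Int.natCast_modEq_iff] at hmod
    exact hmod.eq_of_lt_of_lt hj hk
  · rintro _ ⟨n, rfl⟩
    have hcast : ((n % d).toNat : ℤ) = n % d := Int.toNat_of_nonneg (Int.emod_nonneg n hd)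
    refine ⟨(n % d).toNat, ?_, ?_⟩
    · have := Int.emod_lt n hd
      rw [Finset.mem_coe, Finset.mem_range]
      lia
    · have := (coe_symm_add_intCast_eq_iff F t).2 (Int.mod_modEq n d)
      rwa [← hcast, Int.cast_natCast] at this

/- As `t` runs over `[0, |d|]`, the point `F.symm t` runs once around the circle. -/
lemma eVariationOn_comp_symm_le (hF : Continuous F) (q : UnitAddCircle → ℝ) :
    eVariationOn (fun t => q (F.symm t : ℝ)) (Icc 0 (d.natAbs : ℝ)) ≤ circleVar q := by
  set q' : ℝ → ℝ := fun x => q x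
  have hturn (c : ℝ) : eVariationOn q' (Icc c (c + 1)) = circleVar q :=
    eVariationOn_Icc_add_period (periodic_comp_addCircle_coe q) one_pos c
  set c := F.symm 0
  have hend : F.symm d.natAbs = c + 1 ∨ F.symm d.natAbs = c - 1 := by
    rw [Nat.cast_natAbs, Int.cast_abs]
    rcases abs_choice (d : ℝ) with h | h <;> rw [h]
    · exact .inl (AddConstMapClass.map_const F.symm)
    · exact .inr (by simpa using AddConstMapClass.map_sub_const F.symm 0)
  rcases hF.strictMono_of_inj F.injective with hmono | hanti
  · have hmono' : Monotone F.symm := fun a b hab => by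
      rwa [← hmono.le_iff_le, F.apply_symm_apply, F.apply_symm_apply]
    have hcd : c ≤ F.symm d.natAbs := hmono' d.natAbs.cast_nonneg
    rw [← hturn c]
    refine eVariationOn.comp_le_of_monotoneOn q' F.symm (hmono'.monotoneOn _)
      fun t ht => ⟨hmono' ht.1, (hmono' ht.2).trans ?_⟩
    rcases hend with h | h <;> linarith
  · have hanti' : Antitone F.symm := fun a b hab => by
      rwa [← hanti.le_iff_ge, F.apply_symm_apply, F.apply_symm_apply]
    have hcd : F.symm d.natAbs ≤ c := hanti' d.natAbs.cast_nonneg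
    rw [← hturn (c - 1), sub_add_cancel]
    refine eVariationOn.comp_le_of_antitoneOn q' F.symm (hanti'.antitoneOn _)
      fun t ht => ⟨le_trans ?_ (hanti' ht.2), hanti' ht.1⟩
    rcases hend with h | h <;> linarith

end Lift

section TransferOperator

open Set
open scoped AddConstMap

/-- The Ruelle transfer operator of `T` with weight `w`; the Perron-Frobenius operator of a smooth
map is the case `w = 1 / |T'|`. Its value at a point with infinitely many preimages of nonzero
weight is the default `0` of `finsum`. -/
noncomputable def transferOperator {X Y R : Type*} [NonUnitalNonAssocSemiring R] (T : X → Y)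
    (w f : X → R) : Y → R :=
  fun x => ∑ᶠ y ∈ {y | T y = x}, f y * w y

lemma transferOperator_add_const {X Y R : Type*} [AddGroup Y] [NonUnitalNonAssocSemiring R]
    (T : X → Y) (c : Y) (w f : X → R) (x : Y) :
    transferOperator (fun y => T y + c) w f x = transferOperator T w f (x - c) := by
  simp only [transferOperator, eq_sub_iff_add_eq]

variable {d : ℤ} (F : ℝ ≃+c[1, (d : ℝ)] ℝ) {T : UnitAddCircle → UnitAddCircle}

lemma transferOperator_coe (hT : ∀ x : ℝ, T x = (F x : ℝ)) (w f : UnitAddCircle → ℝ) (t : ℝ) :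
    transferOperator T w f t =
      ∑ k ∈ Finset.range d.natAbs, (f * w) (F.symm (t + k) : ℝ) := by
  rw [← finsum_mem_coe_finset]
  exact (finsum_mem_eq_of_bijOn _ (bijOn_coe_symm_add_natCast F hT t) fun _ _ => rfl).symm

lemma circleVar_transferOperator_le (hF : Continuous F) (hT : ∀ x : ℝ, T x = (F x : ℝ))
    (w f : UnitAddCircle → ℝ) : circleVar (transferOperator T w f) ≤ circleVar (f * w) :=
  calc circleVar (transferOperator T w f)
      = eVariationOn (fun t : ℝ => ∑ k ∈ Finset.range d.natAbs, (f * w) (F.symm (t + k) : ℝ))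
          (Icc 0 1) := by simp only [circleVar, transferOperator_coe F hT]
    _ ≤ ∑ k ∈ Finset.range d.natAbs,
          eVariationOn (fun t : ℝ => (f * w) (F.symm (t + k) : ℝ)) (Icc 0 1) :=
        eVariationOn_finsetSum_le _ _ _
    _ = eVariationOn (fun t => (f * w) (F.symm t : ℝ)) (Icc 0 (d.natAbs : ℝ)) :=
        sum_eVariationOn_comp_add_natCast (fun t => (f * w) (F.symm t : ℝ)) _
    _ ≤ circleVar (f * w) := eVariationOn_comp_symm_le F hF _

end TransferOperator

section Derivative

open Function Set

variable {F : ℝ → ℝ}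

lemma periodic_deriv_of_map_add_const {p c : ℝ} (hdeg : ∀ x, F (x + p) = F x + c) :
    Periodic (deriv F) p := fun x => by
  rw [← deriv_comp_add_const, funext hdeg, deriv_add_const]

lemma circleDeriv_coe (hF : Periodic (deriv F) 1) (x : ℝ) : circleDeriv F x = deriv F x := by
  have := Fact.mk (one_pos (α := ℝ))
  rw [circleDeriv, AddCircle.coe_equivIco_mk_apply, div_one, mul_one, ← Int.self_sub_floor,
    ← mul_one (⌊x⌋ : ℝ), hF.sub_int_mul_eq]

lemma injective_of_deriv_ne_zero (hF : ∀ x, deriv F x ≠ 0) : Injective F := by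
  have hcont : Continuous F := continuous_iff_continuousAt.2 fun x =>
    (differentiableAt_of_deriv_ne_zero (hF x)).continuousAt
  intro a b heq
  by_contra hab
  wlog hlt : a < b generalizing a b
  · exact this heq.symm (Ne.symm hab) (lt_of_le_of_ne (not_lt.1 hlt) (Ne.symm hab))
  obtain ⟨x, -, hx⟩ := exists_deriv_eq_zero hlt hcont.continuousOn heq
  exact hF x hx

lemma circleVar_abs_circleDeriv_inv_ne_top (hF : ContDiff ℝ 2 F) (hF' : ∀ x, deriv F x ≠ 0)
    (hper : Periodic (deriv F) 1) : circleVar (fun y => |circleDeriv F y|⁻¹) ≠ ⊤ := by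
  simp only [circleVar, circleDeriv_coe hper, ← abs_inv]
  have hF₁ : ContDiff ℝ 1 (deriv F) := (contDiff_succ_iff_deriv.1 hF).2.2
  have hvar : BoundedVariationOn (fun x => (deriv F x)⁻¹) (uIcc 0 1) :=
    (hF₁.inv hF').contDiffOn.absolutelyContinuousOnInterval.boundedVariationOn
  rw [uIcc_of_le zero_le_one] at hvar
  have habs : LipschitzWith 1 fun x : ℝ => |x| := lipschitzWith_one_norm
  exact habs.comp_boundedVariationOn hvar

end Derivative

theorem perturbed_circle_Lip_general {F : ℝ → ℝ} (hF : Continuous F) (hinj : Function.Injective F)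
    {d : ℤ} (hdeg : ∀ x, F (x + 1) = F x + d) {T : UnitAddCircle → UnitAddCircle}
    (hT : ∀ x : ℝ, T x = (F x : ℝ)) {w : UnitAddCircle → ℝ} (hw : circleVar w ≠ ⊤) (ε₁ ε₂ : ℝ)
    {f : UnitAddCircle → ℝ} (hf : circleVar f ≠ ⊤) :
    ∫ x, |transferOperator (fun y => T y + (ε₁ : UnitAddCircle)) w f x -
        transferOperator (fun y => T y + (ε₂ : UnitAddCircle)) w f x| ≤
      2 * bvNormT w * |ε₁ - ε₂| * bvNormT f := by
  obtain ⟨G, rfl⟩ := exists_addConstEquiv_coe_eq hF hinj hdeg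
  have hle : circleVar (transferOperator T w f) ≤ ENNReal.ofReal (2 * bvNormT f * bvNormT w) :=
    (circleVar_transferOperator_le G hF hT w f).trans (circleVar_mul_le hf hw)
  have hnonneg : 0 ≤ 2 * bvNormT f * bvNormT w :=
    mul_nonneg (mul_nonneg two_pos.le (bvNormT_nonneg f)) (bvNormT_nonneg w)
  simp only [transferOperator_add_const]
  calc _ ≤ |ε₁ - ε₂| * (circleVar (transferOperator T w f)).toReal :=
        integral_abs_sub_comp_sub_le (ne_top_of_le_ne_top ENNReal.ofReal_ne_top hle) ε₁ ε₂
    _ ≤ |ε₁ - ε₂| * (2 * bvNormT f * bvNormT w) := by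
        gcongr
        exact ENNReal.toReal_le_of_le_ofReal hnonneg hle
    _ = 2 * bvNormT w * |ε₁ - ε₂| * bvNormT f := by ring

/-- Lipschitz continuity (Lip) of the transfer operators of additively
perturbed expanding circle maps: there is `C̃ < ∞` such that for all `ε₁, ε₂ ∈ (−1,1)` and
every `f` of bounded variation, `‖P_{ε₁}f − P_{ε₂}f‖_{L¹} ≤ C̃ |ε₁−ε₂| ‖f‖_BV`; in particular
`d(P_{ε₁}, P_{ε₂}) ≤ C̃ |ε₁ − ε₂|`. -/
theorem perturbed_circle_Lip
    (F : ℝ → ℝ) (hF : ContDiff ℝ 2 F)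
    (d : ℤ) (hdeg : ∀ x : ℝ, F (x + 1) = F x + d)
    (Λ : ℝ) (hΛ : 1 < Λ) (hexp : ∀ x : ℝ, Λ ≤ |deriv F x|)
    (C₁ : ℝ) (hdist : ∀ x : ℝ, |deriv (deriv F) x| ≤ C₁ * |deriv F x|)
    (T : UnitAddCircle → UnitAddCircle)
    (hT : ∀ x : ℝ, T (x : UnitAddCircle) = ((F x : ℝ) : UnitAddCircle))
    (hfin : ∀ (e : ℝ) (x : UnitAddCircle),
      {y : UnitAddCircle | T y + (e : UnitAddCircle) = x}.Finite)
    (Pop : ℝ → (UnitAddCircle → ℝ) → (UnitAddCircle → ℝ))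
    (hP : ∀ (e : ℝ) (f : UnitAddCircle → ℝ) (x : UnitAddCircle),
      Pop e f x = ∑ᶠ y ∈ {y : UnitAddCircle | T y + (e : UnitAddCircle) = x},
        f y / |circleDeriv F y|) :
    ∃ C' : ℝ, ∀ ε₁ ε₂ : ℝ, ε₁ ∈ Set.Ioo (-1 : ℝ) 1 → ε₂ ∈ Set.Ioo (-1 : ℝ) 1 →
      ∀ f : UnitAddCircle → ℝ, Measurable f → circleVar f ≠ ⊤ →
        (∫ x, |Pop ε₁ f x - Pop ε₂ f x|) ≤ C' * |ε₁ - ε₂| * bvNormT f := by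
  have hF' (x : ℝ) : deriv F x ≠ 0 := abs_pos.1 (by linarith [hexp x])
  have hw := circleVar_abs_circleDeriv_inv_ne_top hF hF' (periodic_deriv_of_map_add_const hdeg)
  refine ⟨2 * bvNormT fun y => |circleDeriv F y|⁻¹, fun ε₁ ε₂ _ _ f _ hf => ?_⟩
  simpa only [hP, transferOperator, div_eq_mul_inv] using perturbed_circle_Lip_general hF.continuous
    (injective_of_deriv_ne_zero hF') hdeg hT hw ε₁ ε₂ hf
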